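/- Let d ≥ 3, δ' ∈ (0,1), let a be an integer with 3 ≤ a ≤ d, let N be an integer with N ≥ 100·d²/δ'^{2d+3}, and let η̂ ∈ [0,1]. Let μ be a probability measure on ℝ^N that approximately matches the moments of the standard Gaussian up to degree 2d with slack η̂. Then μ({x ∈ ℝ^N : |Σ_{j=1}^N (x_j/√N)^a| > δ'^{d+1}}) ≤ δ'/d. -/

import Mathlib

open MeasureTheory ProbabilityTheory

/-- The standard Gaussian measure on `ι → ℝ` (product of `N(0,1)`). -/
noncomputable def stdGaussianPi (ι : Type) [Fintype ι] : Measure (ι → ℝ) :=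
  Measure.pi fun _ => gaussianReal 0 1

/-- `μ` approximately matches the moments of the standard Gaussian up to degree `k`
with slack `η`. -/
def MomentMatches {ι : Type} [Fintype ι] (k : ℕ) (η : ℝ)
    (μ : Measure (ι → ℝ)) : Prop :=
  ∀ α : ι → ℕ, (∑ i, α i) ≤ k →
    Integrable (fun x => ∏ i, |x i| ^ α i) μ ∧
    |(∫ x, ∏ i, (x i) ^ α i ∂μ) - ∫ y, ∏ i, (y i) ^ α i ∂(stdGaussianPi ι)| ≤ η

noncomputable def gm (n : ℕ) : ℝ := ∫ x, x ^ n ∂(gaussianReal 0 1)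

lemma gm_pdf_int (n : ℕ) : Integrable (fun x : ℝ => x ^ n * gaussianPDFReal 0 1 x) := by
  have h := integrable_rpow_mul_exp_neg_mul_sq (b := 1/2) (by norm_num) (s := n)
    (by have : (0:ℝ) ≤ n := Nat.cast_nonneg n
        linarith)
  have h2 := h.const_mul (Real.sqrt (2 * Real.pi))⁻¹
  refine h2.congr (Filter.Eventually.of_forall fun x => ?_)
  simp only [gaussianPDFReal, Real.rpow_natCast, NNReal.coe_one, mul_one, sub_zero]
  rw [show -(1/2) * x^2 = -x^2/2 by ring]
  ring

lemma gm_eq (n : ℕ) : gm n = ∫ x, x ^ n * gaussianPDFReal 0 1 x := by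
  rw [gm, integral_gaussianReal_eq_integral_smul (by norm_num)]
  simp only [smul_eq_mul, mul_comm]

lemma pdf_deriv (x : ℝ) : HasDerivAt (gaussianPDFReal 0 1) (-(x * gaussianPDFReal 0 1 x)) x := by
  have h1 : HasDerivAt (fun y : ℝ => -(y - 0)^2 / (2 * ((1 : NNReal) : ℝ))) (-x) x := by
    have := (((hasDerivAt_id x).sub_const 0).pow 2).neg.div_const (2 * ((1 : NNReal) : ℝ))
    refine HasDerivAt.congr_deriv (f := fun y : ℝ => -(y - 0)^2 / (2 * ((1 : NNReal) : ℝ))) this ?_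
    simp
    ring
  have h2 := (h1.exp).const_mul (Real.sqrt (2 * Real.pi * ((1 : NNReal) : ℝ)))⁻¹
  rw [gaussianPDFReal_def]
  refine h2.congr_deriv ?_
  ring

lemma gm_zero : gm 0 = 1 := by simp [gm]

lemma gm_one : gm 1 = 0 := by
  simp [gm]

lemma gm_rec (n : ℕ) : gm (n + 2) = (n + 1) * gm n := by
  have hv : Integrable (fun x : ℝ => x ^ (n+1) * -(x * gaussianPDFReal 0 1 x)) := by
    refine (gm_pdf_int (n+2)).neg.congr (Filter.Eventually.of_forall fun x => ?_)
    simp only [Pi.neg_apply]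
    ring
  have hu : Integrable (fun x : ℝ => ((n + 1 : ℝ) * x ^ n) * gaussianPDFReal 0 1 x) := by
    refine ((gm_pdf_int n).const_mul (n+1:ℝ)).congr (Filter.Eventually.of_forall fun x => ?_)
    simp only
    ring
  have h := integral_mul_deriv_eq_deriv_mul_of_integrable
    (u := fun x : ℝ => x ^ (n+1)) (v := gaussianPDFReal 0 1)
    (u' := fun x : ℝ => (n+1 : ℝ) * x ^ n) (v' := fun x => -(x * gaussianPDFReal 0 1 x))
    (fun x _ => by simpa using hasDerivAt_pow (n+1) x) (fun x _ => pdf_deriv x)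
    hv hu (gm_pdf_int (n+1))
  have e1 : ∫ x : ℝ, x ^ (n+1) * -(x * gaussianPDFReal 0 1 x) = - gm (n+2) := by
    rw [gm_eq, ← integral_neg]
    congr 1; ext x; ring
  have e2 : ∫ x : ℝ, ((n+1 : ℝ) * x ^ n) * gaussianPDFReal 0 1 x = (n+1) * gm n := by
    rw [gm_eq, ← integral_const_mul]
    congr 1; ext x; ring
  rw [e1, e2] at h
  linarith

lemma gm_sq (n : ℕ) : gm (n + 2) ^ 2 ≤ ((n : ℝ) + 2) ^ n := by
  induction n using Nat.strong_induction_on with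
  | _ n ih =>
    match n with
    | 0 => simp [gm_rec, gm_zero]
    | 1 => rw [gm_rec, gm_one]; norm_num
    | k + 2 =>
      have h := ih k (by omega)
      rw [gm_rec (k + 2), mul_pow]
      push_cast
      have hk : (0:ℝ) ≤ k := Nat.cast_nonneg k
      calc ((k:ℝ) + 2 + 1)^2 * gm (k+2) ^ 2 ≤ ((k:ℝ) + 2 + 2)^2 * ((k:ℝ) + 2 + 2)^k := by
            gcongr
            · linarith
            · exact h.trans (by gcongr; linarith)
        _ = _ := by rw [← pow_add, add_comm 2 k]

lemma gm_diag (b : ℕ) : gm ((b+2) + (b+2)) ≤ (2 * ((b:ℝ) + 2)) ^ (b+1) := by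
  have h := gm_sq (b + 2 + b)
  rw [show b + 2 + b + 2 = (b+2)+(b+2) by ring] at h
  refine le_of_sq_le_sq ?_ (by positivity)
  refine h.trans (le_of_eq ?_)
  rw [← pow_mul]
  push_cast
  congr 1 <;> ring

lemma gauss_prod {N : ℕ} (α : Fin N → ℕ) :
    ∫ y, ∏ i, (y i) ^ α i ∂(stdGaussianPi (Fin N)) = ∏ i, gm (α i) := by
  rw [stdGaussianPi]
  exact integral_fintype_prod_eq_prod (fun i (x : ℝ) => x ^ α i)

lemma pair_bound {N d b : ℕ} (hb : b + 2 ≤ d) {η : ℝ} (hη : η ≤ 1)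
    (μ : Measure (Fin N → ℝ)) (hμ : MomentMatches (2 * d) η μ) (i j : Fin N) :
    Integrable (fun x => x i ^ (b+2) * x j ^ (b+2)) μ ∧
    ∫ x, x i ^ (b+2) * x j ^ (b+2) ∂μ ≤
      (if i = j then (2 * ((b:ℝ) + 2)) ^ (b+1) + 1 else 0) + ((2 * ((b:ℝ) + 2)) ^ b + 1) := by
  have key : ∀ (f : Fin N → ℕ → ℝ), (∀ k, f k 0 = 1) → i ≠ j →
      ∏ k, f k ((Pi.single i (b+2) + Pi.single j (b+2) : Fin N → ℕ) k)
        = f i (b+2) * f j (b+2) := by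
    intro f hf hij
    rw [← Finset.prod_subset (Finset.subset_univ {i, j}), Finset.prod_pair hij]
    · simp [Pi.single_apply, hij, hij.symm]
    · intro k _ hk
      simp only [Finset.mem_insert, Finset.mem_singleton, not_or] at hk
      simp [Pi.single_apply, hk.1, hk.2, hf]
  have key2 : ∀ (f : Fin N → ℕ → ℝ), (∀ k, f k 0 = 1) → i = j →
      ∏ k, f k ((Pi.single i (b+2) + Pi.single j (b+2) : Fin N → ℕ) k)
        = f i ((b+2) + (b+2)) := by
    intro f hf hij
    subst hij
    rw [Finset.prod_eq_single i]
    · simp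
    · intro k _ hk
      simp [Pi.single_apply, hk, hf]
    · simp
  obtain ⟨h1, h2⟩ := hμ (Pi.single i (b+2) + Pi.single j (b+2)) (by
    simp only [Pi.add_apply, Finset.sum_add_distrib, Finset.sum_pi_single', Finset.mem_univ, if_true]
    omega)
  have hp : ∀ x : Fin N → ℝ,
      ∏ k, x k ^ ((Pi.single i (b+2) + Pi.single j (b+2) : Fin N → ℕ) k)
        = x i ^ (b+2) * x j ^ (b+2) := by
    intro x
    by_cases hij : i = j
    · rw [key2 (fun k n => x k ^ n) (by simp) hij, ← hij, pow_add]
    · rw [key (fun k n => x k ^ n) (by simp) hij]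
  rw [gauss_prod] at h2
  simp only [hp] at h2
  constructor
  · refine (h1.congr' (g := fun x => x i ^ (b+2) * x j ^ (b+2)) ?_ ?_)
    · exact (by fun_prop : Measurable _).aestronglyMeasurable
    · refine Filter.Eventually.of_forall fun x => ?_
      rw [← hp x]
      simp [Finset.abs_prod, abs_pow]
  · have h3 := (abs_le.1 h2).2
    have hO : (0:ℝ) ≤ (2 * ((b:ℝ) + 2)) ^ b := by positivity
    by_cases hij : i = j
    · rw [key2 (fun _ n => gm n) (fun _ => gm_zero) hij] at h3
      have := gm_diag b
      rw [if_pos hij]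
      linarith
    · rw [key (fun _ n => gm n) (fun _ => gm_zero) hij] at h3
      have := gm_sq b
      have h4 : ((b:ℝ) + 2)^b ≤ (2 * ((b:ℝ) + 2)) ^ b := by
        gcongr
        have : (0:ℝ) ≤ b := Nat.cast_nonneg b
        linarith
      rw [if_neg hij]
      linarith [sq (gm (b+2))]

theorem concentration_sum_powers (d a N : ℕ) (hd : 3 ≤ d) (ha : 3 ≤ a) (had : a ≤ d)
    (δ' ηh : ℝ) (hδ' : δ' ∈ Set.Ioo (0 : ℝ) 1)
    (hN : 100 * (d : ℝ) ^ 2 / δ' ^ (2 * d + 3) ≤ (N : ℝ))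
    (hη : ηh ∈ Set.Icc (0 : ℝ) 1)
    (μ : Measure (Fin N → ℝ)) [IsProbabilityMeasure μ]
    (hμ : MomentMatches (2 * d) ηh μ) :
    μ {x | δ' ^ (d + 1) < |∑ j, (x j / Real.sqrt N) ^ a|} ≤
      ENNReal.ofReal (δ' / d) := by
  obtain ⟨h0, h1⟩ := hδ'
  have hδp : 0 < δ' ^ (2 * d + 3) := by positivity
  have hd3 : (3:ℝ) ≤ d := by exact_mod_cast hd
  have hN' : 100 * (d:ℝ)^2 ≤ N * δ' ^ (2*d+3) := (div_le_iff₀ hδp).1 hN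
  have hδ1 : δ' ^ (2 * d + 3) ≤ 1 := pow_le_one₀ h0.le h1.le
  have hNd : 100 * (d:ℝ)^2 ≤ N := by
    refine hN'.trans ?_
    have : (0:ℝ) ≤ N := Nat.cast_nonneg N
    nlinarith
  have hNpos : (0:ℝ) < N := by nlinarith
  obtain ⟨e, rfl⟩ : ∃ e, a = (e + 1) + 2 := ⟨a - 3, by omega⟩
  have hc : (((e+1 : ℕ) : ℝ) + 2) ≤ d := by exact_mod_cast had
  set c : ℝ := 2 * (((e+1 : ℕ) : ℝ) + 2) with hcdef
  have hc0 : 0 < c := by positivity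
  have hcN : c ≤ N := by nlinarith
  have hN1 : (1:ℝ) ≤ N := by nlinarith
  have hpair := fun i j => pair_bound had hη.2 μ hμ i j
  -- second moment
  have hS : ∀ x : Fin N → ℝ, (∑ j, (x j / Real.sqrt N) ^ (e+1+2)) ^ 2
      = (∑ i, ∑ j, x i ^ (e+1+2) * x j ^ (e+1+2)) / (N:ℝ) ^ (e+1+2) := by
    intro x
    simp only [div_pow]
    rw [← Finset.sum_div, div_pow, ← pow_mul, mul_comm (e+1+2) 2, pow_mul,
      Real.sq_sqrt hNpos.le, sq, Finset.sum_mul_sum]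
  have hint : Integrable (fun x : Fin N → ℝ => (∑ j, (x j / Real.sqrt N) ^ (e+1+2)) ^ 2) μ := by
    simp only [hS]
    exact (integrable_finsetSum _ fun i _ => integrable_finsetSum _ fun j _ =>
      (hpair i j).1).div_const _
  have hval : ∫ x, (∑ j, (x j / Real.sqrt N) ^ (e+1+2)) ^ 2 ∂μ ≤ (2 * c + 2) / N := by
    simp only [hS]
    rw [integral_div, integral_finsetSum _ fun i _ => integrable_finsetSum _ fun j _ =>
      (hpair i j).1]
    simp_rw [integral_finsetSum _ fun j _ => (hpair _ j).1]
    have hle : ∑ i, ∑ j, ∫ x, x i ^ (e+1+2) * x j ^ (e+1+2) ∂μ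
        ≤ N * (c^(e+1+1) + 1) + N^2 * (c^(e+1) + 1) := by
      refine (Finset.sum_le_sum fun i _ => Finset.sum_le_sum fun j _ => (hpair i j).2).trans ?_
      simp only [Finset.sum_add_distrib, Finset.sum_ite_eq, Finset.mem_univ, if_true,
        Finset.sum_const, Finset.card_univ, Fintype.card_fin, nsmul_eq_mul]
      apply le_of_eq
      ring
    rw [div_le_div_iff₀ (by positivity) hNpos]
    have p1 : c ^ e ≤ (N:ℝ)^e := by gcongr
    have p2 : c ^ (e+1) ≤ (N:ℝ)^(e+1) := by gcongr
    have p3 : (1:ℝ) ≤ (N:ℝ)^e := one_le_pow₀ hN1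
    have p4 : (1:ℝ) ≤ (N:ℝ)^(e+1) := one_le_pow₀ hN1
    have q : (N:ℝ) * (c^(e+1+1) + 1) + N^2 * (c^(e+1) + 1)
        ≤ N * (c * N^(e+1) + N^(e+1)) + N^2 * (c * N^e + N^e) := by
      rw [pow_succ' c (e+1), pow_succ' c e]
      rw [pow_succ' c e] at p2
      gcongr
    have := mul_le_mul_of_nonneg_right (hle.trans q) hNpos.le
    refine this.trans (le_of_eq ?_)
    ring
  have hmk := mul_meas_ge_le_integral_of_nonneg (μ := μ)
    (Filter.Eventually.of_forall fun x => sq_nonneg _) hint (δ' ^ (2*d+2))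
  have hsub : {x : Fin N → ℝ | δ' ^ (d + 1) < |∑ j, (x j / Real.sqrt N) ^ (e+1+2)|} ⊆
      {x | δ' ^ (2*d+2) ≤ (∑ j, (x j / Real.sqrt N) ^ (e+1+2)) ^ 2} := by
    intro x hx
    simp only [Set.mem_setOf_eq] at hx ⊢
    rw [← sq_abs, show 2*d+2 = (d+1)*2 by ring, pow_mul]
    gcongr
  refine (measure_mono hsub).trans ?_
  rw [← ofReal_measureReal]
  apply ENNReal.ofReal_le_ofReal
  set m := μ.real {x | δ' ^ (2*d+2) ≤ (∑ j, (x j / Real.sqrt N) ^ (e+1+2)) ^ 2}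
  have hfin := hmk.trans hval
  rw [le_div_iff₀ hNpos] at hfin
  rw [le_div_iff₀ (by linarith)]
  have hp : 0 < δ' ^ (2*d+2) * N := by positivity
  refine le_of_mul_le_mul_left ?_ hp
  have e1 : δ' ^ (2*d+2) * N * δ' = N * δ' ^ (2*d+3) := by ring
  rw [e1]
  refine le_trans ?_ hN'
  calc δ' ^ (2*d+2) * N * (m * d) = (δ' ^ (2*d+2) * m * N) * d := by ring
    _ ≤ (2 * c + 2) * d := by gcongr
    _ ≤ 100 * (d:ℝ)^2 := by nlinarith
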